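/- For every γ ∈ (1,2) and every N ≥ 1, the N×N real symmetric Toeplitz matrix A_γ with (i,j) entry s_{i−j}^{(γ)} is positive definite. -/

import Mathlib

open Matrix

/-- The fourth-order coefficients `s_k^{(γ)}`. -/
noncomputable def sCoef (γ : ℝ) (k : ℤ) : ℝ :=
  ((-1 : ℝ) ^ k * Real.Gamma (γ + 1) /
      (Real.Gamma (γ / 2 - k + 1) * Real.Gamma (γ / 2 + k + 1))) *
    (1 + γ * (γ + 1) * (γ + 2) / (6 * (γ - 2 * k + 2) * (γ + 2 * k + 2)))

/-- The `N×N` symmetric Toeplitz matrix `A_γ` with `(i,j)` entry `s_{i-j}^{(γ)}`. -/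
noncomputable def Amat (γ : ℝ) (N : ℕ) : Matrix (Fin N) (Fin N) ℝ :=
  fun i j => sCoef γ ((i : ℤ) - (j : ℤ))

/-! The symbol of the Toeplitz matrix `A_γ` is `|2 sin (θ/2)| ^ γ * (1 + γ/6 * sin² (θ/2))`. Hence
`sCoef γ = g γ + γ/24 * g (γ + 2)`, where `g γ` denotes the Fourier coefficients of
`|2 sin (θ/2)| ^ γ`. Passing from `g γ` to `g (γ + 2)` is minus a second central difference, i.e.
the congruence `Dᵀ * T * D` of Toeplitz matrices with an injective bidiagonal `D`, so it preserves
positive definiteness. This reduces everything to the Toeplitz matrix of `g γ` for `0 ≤ γ < 2`. It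
is the identity for `γ = 0`; otherwise it has negative off-diagonal entries and, because the row
sums telescope, positive row sums. -/

section DiagonalDominance

variable {n R : Type*} [Fintype n] [CommRing R]

lemma two_mul_dotProduct_mulVec_add_sum_sub_sq {A : Matrix n n R} (hA : A.IsSymm) (x : n → R) :
    2 * (x ⬝ᵥ A *ᵥ x) + ∑ i, ∑ j, A i j * (x i - x j) ^ 2 = 2 * ∑ i, (∑ j, A i j) * x i ^ 2 := by
  have swap : ∑ i, ∑ j, A i j * x j ^ 2 = ∑ i, ∑ j, A i j * x i ^ 2 := by
    rw [Finset.sum_comm]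
    simp only [hA.apply]
  have quadForm : x ⬝ᵥ A *ᵥ x = ∑ i, ∑ j, A i j * (x i * x j) := by
    simp only [dotProduct, mulVec, Finset.mul_sum, mul_left_comm]
  have expand : ∑ i, ∑ j, A i j * (x i - x j) ^ 2 = ∑ i, ∑ j, A i j * x i ^ 2 +
      ∑ i, ∑ j, A i j * x j ^ 2 - 2 * ∑ i, ∑ j, A i j * (x i * x j) := by
    simp only [Finset.mul_sum, ← Finset.sum_add_distrib, ← Finset.sum_sub_distrib]
    exact Finset.sum_congr rfl fun i _ => Finset.sum_congr rfl fun j _ => by ring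
  simp only [expand, swap, quadForm, Finset.sum_mul]
  ring

lemma posDef_of_offDiag_nonpos_of_rowSum_pos [LinearOrder R] [IsStrictOrderedRing R] [StarRing R]
    [TrivialStar R] {A : Matrix n n R} (hA : A.IsSymm) (hoff : ∀ i j, i ≠ j → A i j ≤ 0)
    (hrow : ∀ i, 0 < ∑ j, A i j) : A.PosDef := by
  refine .of_dotProduct_mulVec_pos ((conjTranspose_eq_transpose_of_trivial A).trans hA)
    fun x hx => ?_
  obtain ⟨k, hk⟩ : ∃ k, x k ≠ 0 := Function.ne_iff.1 hx
  have hdiag : 0 < ∑ i, (∑ j, A i j) * x i ^ 2 :=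
    Finset.sum_pos' (fun i _ => mul_nonneg (hrow i).le (sq_nonneg _))
      ⟨k, Finset.mem_univ k, mul_pos (hrow k) (by positivity)⟩
  have hoffDiag : ∑ i, ∑ j, A i j * (x i - x j) ^ 2 ≤ 0 := by
    refine Finset.sum_nonpos fun i _ => Finset.sum_nonpos fun j _ => ?_
    obtain rfl | hij := eq_or_ne i j
    · simp
    · exact mul_nonpos_of_nonpos_of_nonneg (hoff i j hij) (sq_nonneg _)
  have := two_mul_dotProduct_mulVec_add_sum_sub_sq hA x
  rw [star_trivial]
  linarith

end DiagonalDominance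

section Toeplitz

/-- The `N × N` Toeplitz matrix with `(i, j)` entry `c (i - j)`. -/
def toeplitz {R : Type*} (c : ℤ → R) (N : ℕ) : Matrix (Fin N) (Fin N) R :=
  .of fun i j => c ((i : ℤ) - (j : ℤ))

lemma toeplitz_isSymm {R : Type*} {c : ℤ → R} (hc : Function.Even c) (N : ℕ) :
    (toeplitz c N).IsSymm :=
  Matrix.IsSymm.ext fun i j => by simp only [toeplitz, of_apply, ← hc (i - j), neg_sub]

variable {R : Type*} [Ring R]

lemma toeplitz_single_zero_one (N : ℕ) : toeplitz (Pi.single 0 (1 : R)) N = 1 := by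
  ext i j
  simp [toeplitz, Pi.single_apply, one_apply, sub_eq_zero, Fin.ext_iff]

/-- Minus the second central difference of a sequence; on Fourier coefficients this is
multiplication of the function by `4 sin² (θ/2)`. -/
def negSecondDiff (c : ℤ → R) (k : ℤ) : R :=
  2 * c k - c (k - 1) - c (k + 1)

/-- The matrix of the backward difference with zero boundary values on both sides: the `i`-th
entry of `diffMatrix R N *ᵥ x` is `x i - x (i - 1)`, where `x (-1) = x N = 0`. -/
def diffMatrix (R : Type*) [Ring R] (N : ℕ) : Matrix (Fin (N + 1)) (Fin N) R :=
  .of fun i j => (if i = j.castSucc then 1 else 0) - if i = j.succ then 1 else 0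

lemma diffMatrix_mulVec (N : ℕ) (x : Fin N → R) :
    diffMatrix R N *ᵥ x = Fin.snoc (α := fun _ => R) x 0 - Fin.cons (α := fun _ => R) 0 x := by
  have hsnoc (i : Fin (N + 1)) :
      ∑ j, (if i = j.castSucc then x j else 0) = Fin.snoc (α := fun _ => R) x 0 i := by
    induction i using Fin.lastCases <;> simp [(Fin.castSucc_ne_last _).symm]
  have hcons (i : Fin (N + 1)) :
      ∑ j, (if i = j.succ then x j else 0) = Fin.cons (α := fun _ => R) 0 x i := by
    cases i using Fin.cases <;> simp [(Fin.succ_ne_zero _).symm]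
  ext i
  simp only [diffMatrix, mulVec, dotProduct, of_apply, sub_mul, ite_mul, one_mul, zero_mul,
    Finset.sum_sub_distrib, hsnoc, hcons, Pi.sub_apply]

lemma diffMatrix_mulVec_injective (N : ℕ) : Function.Injective (diffMatrix R N).mulVec := by
  have eq_zero (x : Fin N → R) (hDx : diffMatrix R N *ᵥ x = 0) : x = 0 := by
    have hx : ∀ i, Fin.snoc (α := fun _ => R) x 0 i = Fin.cons (α := fun _ => R) 0 x i :=
      congr_fun (sub_eq_zero.1 ((diffMatrix_mulVec N x).symm.trans hDx))
    have hcons : ∀ i : Fin (N + 1), Fin.cons (α := fun _ => R) 0 x i = 0 :=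
      Fin.induction rfl fun i hi => by
        simpa only [← hx i.castSucc, Fin.snoc_castSucc, Fin.cons_succ] using hi
    exact funext fun i => by simpa using hcons i.succ
  exact fun x y hxy => sub_eq_zero.1 (eq_zero _ (by rw [mulVec_sub, sub_eq_zero.2 hxy]))

lemma conjTranspose_diffMatrix_mul_toeplitz_mul_diffMatrix [StarRing R] (c : ℤ → R) (N : ℕ) :
    (diffMatrix R N)ᴴ * toeplitz c (N + 1) * diffMatrix R N = toeplitz (negSecondDiff c) N := by
  have hleft (i : Fin N) (k : Fin (N + 1)) : ((diffMatrix R N)ᴴ * toeplitz c (N + 1)) i k =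
      c (i - k) - c (i + 1 - k) := by
    simp [diffMatrix, toeplitz, Matrix.mul_apply, sub_mul, apply_ite star]
  ext i j
  have hright : ((diffMatrix R N)ᴴ * toeplitz c (N + 1) * diffMatrix R N) i j =
      c (i - j) - c (i + 1 - j) - (c (i - (j + 1)) - c (i + 1 - (j + 1))) := by
    rw [Matrix.mul_apply]
    simp only [hleft]
    simp [diffMatrix, mul_sub]
  rw [hright, add_sub_add_right_eq_sub, add_sub_right_comm (i : ℤ), ← sub_sub, toeplitz, of_apply,
    negSecondDiff, two_mul]
  abel

lemma posDef_toeplitz_negSecondDiff [PartialOrder R] [StarRing R] {c : ℤ → R} {N : ℕ}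
    (h : (toeplitz c (N + 1)).PosDef) : (toeplitz (negSecondDiff c) N).PosDef :=
  conjTranspose_diffMatrix_mul_toeplitz_mul_diffMatrix c N ▸
    h.conjTranspose_mul_mul_same (diffMatrix_mulVec_injective N)

end Toeplitz

lemma inv_Gamma_eq_self_mul_inv_Gamma_add_one (s : ℝ) :
    (Real.Gamma s)⁻¹ = s * (Real.Gamma (s + 1))⁻¹ := by
  obtain rfl | hs := eq_or_ne s 0
  · simp [Real.Gamma_zero]
  · rw [Real.Gamma_add_one hs, mul_inv, mul_inv_cancel_left₀ hs]

/-- The coefficients of the fractional centered difference of order `γ`, i.e. the Fourier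
coefficients of `|2 sin (θ/2)| ^ γ`. As `Real.Gamma` is `0` at its poles, `1 / Γ` takes its
correct value `0` there. -/
noncomputable def fracDiffCoef (γ : ℝ) (k : ℤ) : ℝ :=
  (-1) ^ k * Real.Gamma (γ + 1) / (Real.Gamma (γ / 2 - k + 1) * Real.Gamma (γ / 2 + k + 1))

section FracDiffCoef

variable {γ : ℝ}

lemma fracDiffCoef_even (γ : ℝ) : Function.Even (fracDiffCoef γ) := fun k => by
  have hsign : (-1 : ℝ) ^ (-k) = (-1) ^ k := by rw [_root_.zpow_neg, ← _root_.inv_zpow, inv_neg_one]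
  rw [fracDiffCoef, fracDiffCoef, hsign, mul_comm (Real.Gamma (γ / 2 - k + 1))]
  simp only [Int.cast_neg, sub_neg_eq_add, ← sub_eq_add_neg]

lemma fracDiffCoef_add_one_mul (γ : ℝ) (k : ℤ) :
    fracDiffCoef γ (k + 1) * (k + 1 + γ / 2) = fracDiffCoef γ k * (k - γ / 2) := by
  have hsub := inv_Gamma_eq_self_mul_inv_Gamma_add_one (γ / 2 - k)
  have hadd := inv_Gamma_eq_self_mul_inv_Gamma_add_one (γ / 2 + k + 1)
  have hsub' : γ / 2 - (k + 1 : ℤ) + 1 = γ / 2 - k := by push_cast; ring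
  have hadd' : γ / 2 + (k + 1 : ℤ) + 1 = γ / 2 + k + 1 + 1 := by push_cast; ring
  rw [fracDiffCoef, fracDiffCoef, hsub', hadd', zpow_add_one₀ (by norm_num)]
  simp only [div_eq_mul_inv _ (_ * _), mul_inv, hsub, hadd]
  ring

lemma fracDiffCoef_add_two_eq (hγ : -1 < γ) (k : ℤ) :
    fracDiffCoef (γ + 2) k = (γ + 1) * (γ + 2) * ((-1) ^ k * Real.Gamma (γ + 1) /
      (Real.Gamma (γ / 2 - k + 1 + 1) * Real.Gamma (γ / 2 + k + 1 + 1))) := by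
  have hΓ : Real.Gamma (γ + 2 + 1) = (γ + 2) * ((γ + 1) * Real.Gamma (γ + 1)) := by
    rw [Real.Gamma_add_one (by linarith), ← Real.Gamma_add_one (by linarith : γ + 1 ≠ 0),
      add_assoc γ 1 1, one_add_one_eq_two]
  have hsub : (γ + 2) / 2 - k + 1 = γ / 2 - k + 1 + 1 := by ring
  have hadd : (γ + 2) / 2 + k + 1 = γ / 2 + k + 1 + 1 := by ring
  rw [fracDiffCoef, hΓ, hsub, hadd]
  ring

lemma fracDiffCoef_add_two_mul (hγ : -1 < γ) (k : ℤ) :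
    fracDiffCoef (γ + 2) k * ((γ / 2 - k + 1) * (γ / 2 + k + 1)) =
      (γ + 1) * (γ + 2) * fracDiffCoef γ k := by
  have hsub := inv_Gamma_eq_self_mul_inv_Gamma_add_one (γ / 2 - k + 1)
  have hadd := inv_Gamma_eq_self_mul_inv_Gamma_add_one (γ / 2 + k + 1)
  rw [fracDiffCoef_add_two_eq hγ, fracDiffCoef]
  simp only [div_eq_mul_inv _ (_ * _), mul_inv, hsub, hadd]
  ring

lemma fracDiffCoef_add_two_mul_add_one (hγ : -1 < γ) (k : ℤ) :
    fracDiffCoef (γ + 2) k * ((γ / 2 - k) * (γ / 2 - k + 1)) =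
      -((γ + 1) * (γ + 2) * fracDiffCoef γ (k + 1)) := by
  have hsub := inv_Gamma_eq_self_mul_inv_Gamma_add_one (γ / 2 - k)
  have hsub₁ := inv_Gamma_eq_self_mul_inv_Gamma_add_one (γ / 2 - k + 1)
  have hsub' : γ / 2 - (k + 1 : ℤ) + 1 = γ / 2 - k := by push_cast; ring
  have hadd' : γ / 2 + (k + 1 : ℤ) + 1 = γ / 2 + k + 1 + 1 := by push_cast; ring
  rw [fracDiffCoef_add_two_eq hγ, fracDiffCoef, hsub', hadd', zpow_add_one₀ (by norm_num)]
  simp only [div_eq_mul_inv _ (_ * _), mul_inv, hsub, hsub₁]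
  ring

lemma fracDiffCoef_add_two (hγ : -1 < γ) :
    fracDiffCoef (γ + 2) = negSecondDiff (fracDiffCoef γ) := by
  funext k
  have hpred : fracDiffCoef (γ + 2) k * ((γ / 2 + k) * (γ / 2 + k + 1)) =
      -((γ + 1) * (γ + 2) * fracDiffCoef γ (k - 1)) := by
    have h := fracDiffCoef_add_two_mul_add_one hγ (-k)
    rwa [fracDiffCoef_even, ← fracDiffCoef_even γ (-k + 1), neg_add, neg_neg, ← sub_eq_add_neg,
      Int.cast_neg, sub_neg_eq_add] at h
  have hne : (γ + 1) * (γ + 2) ≠ 0 := mul_ne_zero (by linarith) (by linarith)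
  refine mul_left_cancel₀ hne ?_
  rw [negSecondDiff]
  linear_combination 2 * fracDiffCoef_add_two_mul hγ k + hpred +
    fracDiffCoef_add_two_mul_add_one hγ k

lemma sCoef_eq_fracDiffCoef_add (hγ : -1 < γ) (hγ₂ : ∀ k : ℤ, γ ≠ 2 * k) :
    sCoef γ = fracDiffCoef γ + (γ / 24) • fracDiffCoef (γ + 2) := by
  funext k
  have hsub : γ / 2 - k + 1 ≠ 0 := fun h => hγ₂ (k - 1) (by push_cast; linarith)
  have hadd : γ / 2 + k + 1 ≠ 0 := fun h => hγ₂ (-k - 1) (by push_cast; linarith)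
  have hden : 6 * (γ - 2 * k + 2) * (γ + 2 * k + 2) =
      24 * ((γ / 2 - k + 1) * (γ / 2 + k + 1)) := by ring
  rw [Pi.add_apply, Pi.smul_apply, eq_div_of_mul_eq (mul_ne_zero hsub hadd)
    (fracDiffCoef_add_two_mul hγ k), smul_eq_mul, sCoef, ← fracDiffCoef, hden]
  field_simp

lemma mul_sum_range_fracDiffCoef_sub (γ : ℝ) (k : ℤ) (N : ℕ) :
    γ * ∑ j ∈ Finset.range N, fracDiffCoef γ (k - j) =
      fracDiffCoef γ (k - N) * (k - N - γ / 2) - fracDiffCoef γ k * (k - γ / 2) := by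
  have hstep (j : ℕ) : γ * fracDiffCoef γ (k - j) =
      fracDiffCoef γ (k - (j + 1 : ℕ)) * (k - (j + 1 : ℕ) - γ / 2) -
        fracDiffCoef γ (k - j) * (k - j - γ / 2) := by
    have h := fracDiffCoef_add_one_mul γ (k - (j + 1 : ℕ))
    rw [Nat.cast_succ, sub_add_eq_sub_sub, sub_add_cancel] at h
    rw [Nat.cast_succ, sub_add_eq_sub_sub]
    push_cast at h ⊢
    linear_combination h
  rw [Finset.mul_sum, Finset.sum_congr rfl fun j _ => hstep j, Finset.sum_range_sub
    (fun j : ℕ => fracDiffCoef γ (k - j) * (k - j - γ / 2))]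
  simp

lemma fracDiffCoef_mul_sub_neg (hγ : γ ∈ Set.Ioo 0 2) (n : ℕ) :
    fracDiffCoef γ n * (n - γ / 2) < 0 := by
  obtain ⟨hγ₀, hγ₂⟩ := hγ
  induction n with
  | zero =>
    have hpos : 0 < fracDiffCoef γ 0 := by
      have := Real.Gamma_pos_of_pos (by linarith : 0 < γ + 1)
      have := Real.Gamma_pos_of_pos (by linarith : 0 < γ / 2 + 1)
      simp only [fracDiffCoef, zpow_zero, Int.cast_zero, sub_zero, add_zero]
      positivity
    exact mul_neg_of_pos_of_neg hpos (by simpa)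
  | succ n ih =>
    have h := fracDiffCoef_add_one_mul γ n
    rw [Int.cast_natCast] at h
    have hneg : fracDiffCoef γ (n + 1) < 0 :=
      neg_of_mul_neg_left (h.trans_lt ih) (by linarith)
    push_cast
    exact mul_neg_of_neg_of_pos hneg (by linarith)

lemma fracDiffCoef_neg_of_ne_zero (hγ : γ ∈ Set.Ioo 0 2) {k : ℤ} (hk : k ≠ 0) :
    fracDiffCoef γ k < 0 := by
  have hcoef : fracDiffCoef γ k.natAbs = fracDiffCoef γ k := by
    obtain h | h := k.natAbs_eq
    · rw [← h]
    · rw [← fracDiffCoef_even, ← h]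
  have hone : (1 : ℝ) ≤ k.natAbs := by exact_mod_cast Int.natAbs_pos.2 hk
  rw [← hcoef]
  exact neg_of_mul_neg_left (fracDiffCoef_mul_sub_neg hγ k.natAbs) (by linarith [hγ.2])

lemma sum_range_fracDiffCoef_sub_pos (hγ : γ ∈ Set.Ioo 0 2) {i N : ℕ} (hi : i < N) :
    0 < ∑ j ∈ Finset.range N, fracDiffCoef γ (i - j) := by
  have hleft : 0 < fracDiffCoef γ (i - N) * (i - N - γ / 2) := by
    have hiN : (i : ℝ) < N := by exact_mod_cast hi
    exact mul_pos_of_neg_of_neg (fracDiffCoef_neg_of_ne_zero hγ (by lia)) (by linarith [hγ.1])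
  have hsum := mul_sum_range_fracDiffCoef_sub γ i N
  rw [Int.cast_natCast] at hsum
  refine pos_of_mul_pos_right (a := γ) ?_ hγ.1.le
  linarith [fracDiffCoef_mul_sub_neg hγ i]

lemma posDef_toeplitz_fracDiffCoef_of_mem_Ioo (hγ : γ ∈ Set.Ioo 0 2) (N : ℕ) :
    (toeplitz (fracDiffCoef γ) N).PosDef := by
  refine posDef_of_offDiag_nonpos_of_rowSum_pos (toeplitz_isSymm (fracDiffCoef_even γ) N)
    (fun i j hij => ?_) fun i => ?_
  · have := Fin.val_ne_of_ne hij
    exact (fracDiffCoef_neg_of_ne_zero hγ (by lia)).le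
  · simpa only [toeplitz, of_apply, Finset.sum_range] using
      sum_range_fracDiffCoef_sub_pos hγ i.isLt

lemma fracDiffCoef_zero : fracDiffCoef 0 = Pi.single 0 1 := by
  have hrec (k : ℤ) : fracDiffCoef 0 (k + 1) * (k + 1 : ℤ) = fracDiffCoef 0 k * k := by
    simpa using fracDiffCoef_add_one_mul 0 k
  have hmul (k : ℤ) : fracDiffCoef 0 k * k = 0 := by
    induction k with
    | zero => simp
    | succ n ih => exact (hrec n).trans ih
    | pred n ih =>
      have h := hrec (-n - 1)
      rw [sub_add_cancel] at h
      exact h.symm.trans ih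
  funext k
  obtain rfl | hk := eq_or_ne k 0
  · simp [fracDiffCoef]
  · rw [Pi.single_eq_of_ne hk]
    exact (mul_eq_zero.1 (hmul k)).resolve_right (Int.cast_ne_zero.2 hk)

lemma posDef_toeplitz_fracDiffCoef (hγ : 0 ≤ γ) (N : ℕ) :
    (toeplitz (fracDiffCoef γ) N).PosDef := by
  obtain ⟨n, hn⟩ := exists_nat_gt (γ / 2)
  induction n generalizing γ N with
  | zero =>
    rw [Nat.cast_zero] at hn
    linarith
  | succ n ih =>
    obtain rfl | hpos := hγ.eq_or_lt
    · rw [fracDiffCoef_zero, toeplitz_single_zero_one]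
      exact .one
    obtain hlt | hge := lt_or_ge γ 2
    · exact posDef_toeplitz_fracDiffCoef_of_mem_Ioo ⟨hpos, hlt⟩ N
    · rw [← sub_add_cancel γ 2, fracDiffCoef_add_two (by linarith)]
      push_cast at hn
      exact posDef_toeplitz_negSecondDiff (ih (by linarith) (N + 1) (by linarith))

end FracDiffCoef

lemma ne_two_mul_intCast_of_mem_Ioo {x : ℝ} (hx : x ∈ Set.Ioo 0 2) (k : ℤ) : x ≠ 2 * k := by
  rintro rfl
  have hpos : 0 < k := by exact_mod_cast (by linarith [hx.1] : (0 : ℝ) < k)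
  have hlt : k < 1 := by exact_mod_cast (by linarith [hx.2] : (k : ℝ) < 1)
  lia

theorem stmt_9_general (γ : ℝ) (hγ₀ : 0 < γ) (hγ : ∀ k : ℤ, γ ≠ 2 * k) (N : ℕ) :
    (Amat γ N).IsSymm ∧ (Amat γ N).PosDef := by
  have hA : Amat γ N =
      toeplitz (fracDiffCoef γ) N + (γ / 24) • toeplitz (fracDiffCoef (γ + 2)) N := by
    ext i j
    exact congr_fun (sCoef_eq_fracDiffCoef_add (by linarith) hγ) _
  have hpos : (Amat γ N).PosDef := hA ▸ (posDef_toeplitz_fracDiffCoef hγ₀.le N).add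
    ((posDef_toeplitz_fracDiffCoef (by linarith) N).smul (by positivity))
  exact ⟨(conjTranspose_eq_transpose_of_trivial _).symm.trans hpos.isHermitian, hpos⟩

theorem stmt_9 (γ : ℝ) (hγ : γ ∈ Set.Ioo (1 : ℝ) 2) (N : ℕ) (hN : 1 ≤ N) :
    (Amat γ N).IsSymm ∧ (Amat γ N).PosDef := by
  have hγ₀ : 0 < γ := one_pos.trans hγ.1
  exact stmt_9_general γ hγ₀ (ne_two_mul_intCast_of_mem_Ioo ⟨hγ₀, hγ.2⟩) N
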